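/- Let (a_{u,v}) be an interesting model, with Φ and Ψ the associated automorphisms of ℂ(x,y). Then Φ∘Ψ = Ψ∘Φ (equivalently, (Φ∘Ψ)² = id, i.e., the group of the model is the dihedral group D4) if and only if there exists λ ∈ ℂ, λ ≠ 0, such that a_{-1,v} = λ·a_{1,v} for all v ∈ {-1,0,1}, or there exists λ ∈ ℂ, λ ≠ 0, such that a_{u,-1} = λ·a_{u,1} for all u ∈ {-1,0,1}. Equivalently, Φ∘Ψ = Ψ∘Φ holds if and only if either a_{0,1}a_{1,-1} = a_{0,-1}a_{1,1}, a_{-1,1}a_{1,-1} = a_{-1,-1}a_{1,1} and a_{-1,1}a_{0,-1} = a_{-1,-1}a_{0,1} all hold, or a_{1,0}a_{-1,1} = a_{-1,0}a_{1,1}, a_{1,-1}a_{-1,1} = a_{-1,-1}a_{1,1} and a_{1,-1}a_{-1,0} = a_{-1,-1}a_{1,0} all hold. -/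

import Mathlib

/- STATEMENT 4: Characterization of the interesting models whose group is D4:
Φ∘Ψ = Ψ∘Φ iff one of the two rows of the step-multiplicity array is a nonzero
multiple of the other (in either orientation), iff the corresponding 2×2 minors vanish. -/

noncomputable section

/-- The field ℂ(x,y) of rational functions in two variables over ℂ. -/
abbrev RF : Type := FractionRing (MvPolynomial (Fin 2) ℂ)

/-- The element x of ℂ(x,y). -/
def Xr : RF := algebraMap (MvPolynomial (Fin 2) ℂ) RF (MvPolynomial.X 0)

/-- The element y of ℂ(x,y). -/
def Yr : RF := algebraMap (MvPolynomial (Fin 2) ℂ) RF (MvPolynomial.X 1)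

/-- The constant c in ℂ(x,y). -/
def Cr (c : ℂ) : RF := algebraMap ℂ RF c

/-- A model is interesting if none of the four boundary triples of multiplicities
is the zero triple. -/
def Interesting (a : ℤ → ℤ → ℂ) : Prop :=
  ¬(a 1 (-1) = 0 ∧ a 1 0 = 0 ∧ a 1 1 = 0) ∧
  ¬(a (-1) 1 = 0 ∧ a 0 1 = 0 ∧ a 1 1 = 0) ∧
  ¬(a (-1) (-1) = 0 ∧ a (-1) 0 = 0 ∧ a (-1) 1 = 0) ∧
  ¬(a (-1) (-1) = 0 ∧ a 0 (-1) = 0 ∧ a 1 (-1) = 0)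

/-!
Write `r` and `s` for the two quotients of trinomials, so that `Ψ y = r(x) / y` and
`Φ x = s(y) / x`. If `Φ` and `Ψ` commute, comparing their compositions at `y` gives
`r(Φ x) = r(x)`. When `r` is not constant, this makes `Φ x`, hence `s(y) = x * Φ x`, algebraic over
the field generated by `x`; as `y` is transcendental over that field, `s` is then constant.
Conversely, when `s` is a constant `l`, the numerator and the denominator of `r` are invariant under
the substitution `x ↦ Φ x = l / x`. Exchanging `x` and `y` treats the case of constant `r`.
-/

open scoped Polynomial

lemma mul_mul_self_eq_one_iff_commute {M : Type*} [Monoid M] {f g : M}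
    (hf : f * f = 1) (hg : g * g = 1) : f * g * (f * g) = 1 ↔ f * g = g * f := by
  have hfg : f * g * (g * f) = 1 := by
    rw [mul_assoc, ← mul_assoc g, hg, one_mul, hf]
  refine ⟨fun h => left_inv_eq_right_inv h hfg, fun h => ?_⟩
  rw [← h] at hfg
  exact hfg

lemma isAlgebraic_of_eval_eq_zero {R L : Type*} [CommRing R] [IsDomain R] [Field L] [Algebra R L]
    {p : L[X]} {t : L} (hp : p ≠ 0) (hcoeff : ∀ n, IsAlgebraic R (p.coeff n))
    (ht : p.eval t = 0) : IsAlgebraic R t := by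
  let A := Subalgebra.algebraicClosure R L
  obtain ⟨q, rfl⟩ : p ∈ Polynomial.lifts (algebraMap A L) :=
    (Polynomial.lifts_iff_coeff_lifts p).mpr fun n => ⟨⟨p.coeff n, hcoeff n⟩, rfl⟩
  have hq : q ≠ 0 := by
    rintro rfl
    exact hp (Polynomial.map_zero _)
  exact IsAlgebraic.restrictScalars R (S := A) ⟨q, hq, by rwa [← Polynomial.eval_map_algebraMap]⟩

lemma algHom_ext_of_adjoin_eq_top {k L M : Type*} [Field k] [Field L] [Algebra k L] [Semiring M]
    [Algebra k M] {S : Set L} (hS : IntermediateField.adjoin k S = ⊤) {f g : L →ₐ[k] M}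
    (h : Set.EqOn f g S) : f = g := by
  let ι := (IntermediateField.adjoin k S).val
  have hι : f.comp ι = g.comp ι := IntermediateField.adjoin_algHom_ext k fun _ hx => h hx
  exact AlgHom.ext fun z => DFunLike.congr_fun hι ⟨z, hS ▸ IntermediateField.mem_top⟩

section Trinomial

variable {k L : Type*} [Field k] [Field L] [Algebra k L] {c d : ℤ → k} {t : L}

/-- The Laurent trinomial `c₋₁ t⁻¹ + c₀ + c₁ t`. Its three coefficients are encoded by a function on
`ℤ`, read off at `-1`, `0` and `1` only, so that the rows of a model are triples of coefficients. -/
def laurentTrinomial (c : ℤ → k) (t : L) : L :=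
  algebraMap k L (c (-1)) * t⁻¹ + algebraMap k L (c 0) + algebraMap k L (c 1) * t

/-- The triples `(c₋₁, c₀, c₁)` and `(d₋₁, d₀, d₁)` are nonzero multiples of each other. -/
def Proportional (c d : ℤ → k) : Prop :=
  ∃ l : k, l ≠ 0 ∧ c (-1) = l * d (-1) ∧ c 0 = l * d 0 ∧ c 1 = l * d 1

/-- The `2 × 2` minors of the matrix with rows `(c₋₁, c₀, c₁)` and `(d₋₁, d₀, d₁)` are zero. -/
def MinorsVanish (c d : ℤ → k) : Prop :=
  d 0 * c 1 = c 0 * d 1 ∧ d (-1) * c 1 = c (-1) * d 1 ∧ d (-1) * c 0 = c (-1) * d 0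

lemma Proportional.minorsVanish (h : Proportional c d) : MinorsVanish c d := by
  obtain ⟨l, -, h₁, h₂, h₃⟩ := h
  refine ⟨?_, ?_, ?_⟩ <;> simp only [h₁, h₂, h₃] <;> ring

lemma MinorsVanish.proportional (h : MinorsVanish c d) (hc : c (-1) ≠ 0 ∨ c 0 ≠ 0 ∨ c 1 ≠ 0)
    (hd : d (-1) ≠ 0 ∨ d 0 ≠ 0 ∨ d 1 ≠ 0) : Proportional c d := by
  obtain ⟨h₁, h₂, h₃⟩ := h
  suffices ∃ l, c (-1) = l * d (-1) ∧ c 0 = l * d 0 ∧ c 1 = l * d 1 by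
    obtain ⟨l, h⟩ := this
    refine ⟨l, ?_, h⟩
    rintro rfl
    simp_all
  rcases hd with hd | hd | hd
  · refine ⟨c (-1) / d (-1), ?_, ?_, ?_⟩ <;> field_simp <;> grind
  · refine ⟨c 0 / d 0, ?_, ?_, ?_⟩ <;> field_simp <;> grind
  · refine ⟨c 1 / d 1, ?_, ?_, ?_⟩ <;> field_simp <;> grind

lemma minorsVanish_of_algebraMap_eq_mul {ρ : L}
    (h₁ : algebraMap k L (c (-1)) = ρ * algebraMap k L (d (-1)))
    (h₂ : algebraMap k L (c 0) = ρ * algebraMap k L (d 0))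
    (h₃ : algebraMap k L (c 1) = ρ * algebraMap k L (d 1)) : MinorsVanish c d := by
  refine ⟨?_, ?_, ?_⟩ <;> apply FaithfulSMul.algebraMap_injective k L <;>
    simp only [map_mul, h₁, h₂, h₃] <;> ring

lemma map_laurentTrinomial {M : Type*} [Field M] [Algebra k M] (f : L →ₐ[k] M) (c : ℤ → k) (t : L) :
    f (laurentTrinomial c t) = laurentTrinomial c (f t) := by
  simp only [laurentTrinomial, map_add, map_mul, map_inv₀, AlgHom.commutes]

lemma exists_ne_zero_of_laurentTrinomial_ne_zero (h : laurentTrinomial c t ≠ 0) :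
    c (-1) ≠ 0 ∨ c 0 ≠ 0 ∨ c 1 ≠ 0 := by
  contrapose! h
  simp [laurentTrinomial, h]

lemma laurentTrinomial_algebraMap_mul_inv {l : k} (hl : l ≠ 0) (hc : c (-1) = l * c 1) (t : L) :
    laurentTrinomial c (algebraMap k L l * t⁻¹) = laurentTrinomial c t := by
  have hl' : algebraMap k L l ≠ 0 := (map_ne_zero _).mpr hl
  simp only [laurentTrinomial, hc, map_mul, mul_inv, inv_inv]
  field_simp
  ring

lemma laurentTrinomial_eq_mul {l : k} (h₁ : c (-1) = l * d (-1)) (h₂ : c 0 = l * d 0)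
    (h₃ : c 1 = l * d 1) (t : L) :
    laurentTrinomial c t = algebraMap k L l * laurentTrinomial d t := by
  simp only [laurentTrinomial, h₁, h₂, h₃, map_mul]
  ring

variable {R : Type*} [CommRing R] [IsDomain R] [Algebra k R] [Algebra R L] [IsScalarTower k R L]

lemma isAlgebraic_algebraMap_of_tower (z : k) : IsAlgebraic R (algebraMap k L z) := by
  rw [IsScalarTower.algebraMap_apply k R L]
  exact isAlgebraic_algebraMap _

lemma isAlgebraic_laurentTrinomial (ht : IsAlgebraic R t) (c : ℤ → k) :
    IsAlgebraic R (laurentTrinomial c t) :=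
  (((isAlgebraic_algebraMap_of_tower _).mul ht.inv).add (isAlgebraic_algebraMap_of_tower _)).add
    ((isAlgebraic_algebraMap_of_tower _).mul ht)

lemma isAlgebraic_of_isAlgebraic_laurentTrinomial_div (hcd : ¬ MinorsVanish c d)
    (hd : laurentTrinomial d t ≠ 0)
    (h : IsAlgebraic R (laurentTrinomial c t / laurentTrinomial d t)) : IsAlgebraic R t := by
  rcases eq_or_ne t 0 with rfl | ht
  · exact isAlgebraic_zero
  generalize hρ : laurentTrinomial c t / laurentTrinomial d t = ρ at h
  rw [div_eq_iff hd] at hρ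
  let e (j : ℤ) : L := algebraMap k L (c j) - ρ * algebraMap k L (d j)
  have he (j : ℤ) : IsAlgebraic R (e j) :=
    (isAlgebraic_algebraMap_of_tower _).sub (h.mul (isAlgebraic_algebraMap_of_tower _))
  let p : Cubic L := ⟨0, e 1, e 0, e (-1)⟩
  have hp : p.toPoly ≠ 0 := by
    intro hp
    obtain ⟨-, h₃, h₂, h₁⟩ := Cubic.ext_iff.mp ((Cubic.toPoly_eq_zero_iff p).mp hp)
    exact hcd <| minorsVanish_of_algebraMap_eq_mul (sub_eq_zero.mp h₁) (sub_eq_zero.mp h₂)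
      (sub_eq_zero.mp h₃)
  have hcoeff : ∀ n, IsAlgebraic R (p.toPoly.coeff n)
    | 0 => p.coeff_eq_d ▸ he (-1)
    | 1 => p.coeff_eq_c ▸ he 0
    | 2 => p.coeff_eq_b ▸ he 1
    | 3 => p.coeff_eq_a ▸ isAlgebraic_zero
    | n + 4 => p.coeff_eq_zero (show 3 < n + 4 by omega) ▸ isAlgebraic_zero
  have hroot : p.toPoly.eval t = 0 := by
    simp only [laurentTrinomial] at hρ
    field_simp at hρ
    simp only [Cubic.toPoly, p, e, map_zero, zero_mul, zero_add, Polynomial.eval_add,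
      Polynomial.eval_mul, Polynomial.eval_C, Polynomial.eval_pow, Polynomial.eval_X]
    linear_combination hρ
  exact isAlgebraic_of_eval_eq_zero hp hcoeff hroot

end Trinomial

section Flip

variable {k L : Type*} [Field k] [Field L] [Algebra k L] {a : ℤ → ℤ → k} {x y : L}
  {Φ Ψ : L →ₐ[k] L}

/-- `Φ` is the endomorphism attached to the model `a` that fixes `y` and inverts `x` up to a
quotient of trinomials in `y`. For `flip a`, with `x` and `y` exchanged, this describes the other
generator `Ψ` of the group of the model `a`. -/
structure IsFlip (a : ℤ → ℤ → k) (x y : L) (Φ : L →ₐ[k] L) : Prop where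
  map_fst : Φ x = x⁻¹ * (laurentTrinomial (a (-1)) y / laurentTrinomial (a 1) y)
  map_snd : Φ y = y

namespace IsFlip

lemma laurentTrinomial_ne_zero (hΦ : IsFlip a x y Φ) (hx : x ≠ 0) :
    laurentTrinomial (a (-1)) y ≠ 0 ∧ laurentTrinomial (a 1) y ≠ 0 := by
  have hΦx : Φ x ≠ 0 := (map_ne_zero Φ).mpr hx
  rw [hΦ.map_fst] at hΦx
  exact div_ne_zero_iff.mp (right_ne_zero_of_mul hΦx)

lemma minorsVanish_iff_proportional (hΦ : IsFlip a x y Φ) (hx : x ≠ 0) :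
    MinorsVanish (a (-1)) (a 1) ↔ Proportional (a (-1)) (a 1) := by
  obtain ⟨hnum, hden⟩ := hΦ.laurentTrinomial_ne_zero hx
  exact ⟨fun h => h.proportional (exists_ne_zero_of_laurentTrinomial_ne_zero hnum)
    (exists_ne_zero_of_laurentTrinomial_ne_zero hden), Proportional.minorsVanish⟩

lemma comp_self (hΦ : IsFlip a x y Φ) (hgen : IntermediateField.adjoin k {x, y} = ⊤) (hx : x ≠ 0) :
    Φ.comp Φ = AlgHom.id k L := by
  obtain ⟨hnum, hden⟩ := hΦ.laurentTrinomial_ne_zero hx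
  refine algHom_ext_of_adjoin_eq_top hgen ?_
  rintro _ (rfl | rfl)
  · simp only [AlgHom.comp_apply, hΦ.map_fst, hΦ.map_snd, map_mul, map_inv₀, map_div₀,
      map_laurentTrinomial, AlgHom.id_apply]
    field_simp
  · simp only [AlgHom.comp_apply, hΦ.map_snd, AlgHom.id_apply]

lemma comp_comm_of_proportional (hΦ : IsFlip a x y Φ) (hΨ : IsFlip (flip a) y x Ψ)
    (hgen : IntermediateField.adjoin k {x, y} = ⊤) (hx : x ≠ 0)
    (h : Proportional (a (-1)) (a 1)) : Φ.comp Ψ = Ψ.comp Φ := by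
  obtain ⟨l, hl, h₁, h₂, h₃⟩ := h
  have hΦx : Φ x = algebraMap k L l * x⁻¹ := by
    rw [hΦ.map_fst, laurentTrinomial_eq_mul h₁ h₂ h₃,
      mul_div_cancel_right₀ _ (hΦ.laurentTrinomial_ne_zero hx).2, mul_comm]
  refine algHom_ext_of_adjoin_eq_top hgen ?_
  rintro _ (rfl | rfl)
  · simp only [AlgHom.comp_apply, hΨ.map_snd, hΦx, map_mul, map_inv₀, AlgHom.commutes]
  · simp only [AlgHom.comp_apply, hΦ.map_snd, hΨ.map_fst, map_mul, map_inv₀, map_div₀,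
      map_laurentTrinomial, hΦx]
    rw [laurentTrinomial_algebraMap_mul_inv (c := flip a (-1)) hl h₁,
      laurentTrinomial_algebraMap_mul_inv (c := flip a 1) hl h₃]

lemma minorsVanish_of_comp_comm {R : Type*} [CommRing R] [IsDomain R] [Algebra k R] [Algebra R L]
    [IsScalarTower k R L] (hΦ : IsFlip a x y Φ) (hΨ : IsFlip (flip a) y x Ψ) (hx₀ : x ≠ 0)
    (hx : IsAlgebraic R x) (hy : Transcendental R y) (h : Φ.comp Ψ = Ψ.comp Φ) :
    MinorsVanish (flip a (-1)) (flip a 1) ∨ MinorsVanish (a (-1)) (a 1) := by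
  have hy₀ : y ≠ 0 := fun hy₀ => hy (hy₀ ▸ isAlgebraic_zero)
  have hr : laurentTrinomial (flip a (-1)) (Φ x) / laurentTrinomial (flip a 1) (Φ x) =
      laurentTrinomial (flip a (-1)) x / laurentTrinomial (flip a 1) x := by
    have hΦΨy : Φ (Ψ y) = Ψ y := by simpa [hΦ.map_snd] using DFunLike.congr_fun h y
    rw [hΨ.map_fst, map_mul, map_inv₀, hΦ.map_snd, map_div₀, map_laurentTrinomial,
      map_laurentTrinomial] at hΦΨy
    exact mul_left_cancel₀ (inv_ne_zero hy₀) hΦΨy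
  by_contra! ⟨hr_minors, hs_minors⟩
  have hΦx : IsAlgebraic R (Φ x) := by
    refine isAlgebraic_of_isAlgebraic_laurentTrinomial_div hr_minors ?_ ?_
    · rw [← map_laurentTrinomial]
      exact (map_ne_zero Φ).mpr (hΨ.laurentTrinomial_ne_zero hy₀).2
    · rw [hr, div_eq_mul_inv]
      exact (isAlgebraic_laurentTrinomial hx _).mul (isAlgebraic_laurentTrinomial hx _).inv
  have hs : laurentTrinomial (a (-1)) y / laurentTrinomial (a 1) y = x * Φ x := by
    rw [hΦ.map_fst, mul_inv_cancel_left₀ hx₀]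
  refine hy (isAlgebraic_of_isAlgebraic_laurentTrinomial_div hs_minors
    (hΦ.laurentTrinomial_ne_zero hx₀).2 ?_)
  rw [hs]
  exact hx.mul hΦx

end IsFlip

end Flip

lemma transcendental_adjoin_singleton {k L : Type*} [Field k] [Field L] [Algebra k L] {x y : L}
    (hxy : AlgebraicIndependent k ![x, y]) :
    Transcendental (Algebra.adjoin k {x}) y := by
  have h := hxy.transcendental_adjoin (s := {0}) (i := 1) (by simp)
  rwa [Set.image_singleton] at h

theorem statement4_general {k L : Type*} [Field k] [Field L] [Algebra k L] {x y : L}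
    (hxy : AlgebraicIndependent k ![x, y]) (hgen : IntermediateField.adjoin k {x, y} = ⊤)
    (a : ℤ → ℤ → k) (Φ Ψ : L →ₐ[k] L) (hΦ : IsFlip a x y Φ) (hΨ : IsFlip (flip a) y x Ψ) :
    ((Φ.comp Ψ).comp (Φ.comp Ψ) = AlgHom.id k L ↔ Φ.comp Ψ = Ψ.comp Φ) ∧
    (Φ.comp Ψ = Ψ.comp Φ ↔
      Proportional (a (-1)) (a 1) ∨ Proportional (flip a (-1)) (flip a 1)) ∧
    (Φ.comp Ψ = Ψ.comp Φ ↔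
      MinorsVanish (flip a (-1)) (flip a 1) ∨ MinorsVanish (a (-1)) (a 1)) := by
  have hx : x ≠ 0 := hxy.ne_zero 0
  have hy : y ≠ 0 := hxy.ne_zero 1
  have hgen' : IntermediateField.adjoin k {y, x} = ⊤ := by rwa [Set.pair_comm]
  have hminors : MinorsVanish (flip a (-1)) (flip a 1) ∨ MinorsVanish (a (-1)) (a 1) ↔
      Proportional (a (-1)) (a 1) ∨ Proportional (flip a (-1)) (flip a 1) := by
    rw [hΦ.minorsVanish_iff_proportional hx, hΨ.minorsVanish_iff_proportional hy, or_comm]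
  have hcomm : Φ.comp Ψ = Ψ.comp Φ ↔
      Proportional (a (-1)) (a 1) ∨ Proportional (flip a (-1)) (flip a 1) := by
    refine ⟨fun h => hminors.mp ?_, ?_⟩
    · exact hΦ.minorsVanish_of_comp_comm hΨ hx
        (isAlgebraic_algebraMap (⟨x, Algebra.self_mem_adjoin_singleton k x⟩ : Algebra.adjoin k {x}))
        (transcendental_adjoin_singleton hxy) h
    · rintro (h | h)
      · exact hΦ.comp_comm_of_proportional hΨ hgen hx h
      · exact (hΨ.comp_comm_of_proportional hΦ hgen' hy h).symm
  exact ⟨mul_mul_self_eq_one_iff_commute (hΦ.comp_self hgen hx) (hΨ.comp_self hgen' hy), hcomm,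
    hcomm.trans hminors.symm⟩

lemma algebraicIndependent_Xr_Yr : AlgebraicIndependent ℂ ![Xr, Yr] := by
  have h := (MvPolynomial.algebraicIndependent_X (Fin 2) ℂ).map'
    (f := IsScalarTower.toAlgHom ℂ (MvPolynomial (Fin 2) ℂ) RF) (IsFractionRing.injective _ RF)
  convert h using 1
  ext i
  fin_cases i <;> rfl

lemma adjoin_Xr_Yr_eq_top : IntermediateField.adjoin ℂ {Xr, Yr} = ⊤ := by
  have h : (IsScalarTower.toAlgHom ℂ (MvPolynomial (Fin 2) ℂ) RF).range =
      Algebra.adjoin ℂ {Xr, Yr} := by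
    rw [← Algebra.map_top, ← MvPolynomial.adjoin_range_X, AlgHom.map_adjoin, ← Set.range_comp]
    congr 1
    ext z
    simp [Fin.exists_fin_two, Xr, Yr, eq_comm]
  rw [← IsFractionRing.algHom_fieldRange_eq_of_comp_eq_of_range_eq (f := AlgHom.id ℂ RF) rfl h]
  exact AlgHom.fieldRange_eq_top.mpr Function.surjective_id

theorem statement4 (a : ℤ → ℤ → ℂ) (hInt : Interesting a)
    (Φ Ψ : RF →ₐ[ℂ] RF)
    (hΦx : Φ Xr = Xr⁻¹ *
      ((Cr (a (-1) (-1)) * Yr⁻¹ + Cr (a (-1) 0) + Cr (a (-1) 1) * Yr) /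
        (Cr (a 1 (-1)) * Yr⁻¹ + Cr (a 1 0) + Cr (a 1 1) * Yr)))
    (hΦy : Φ Yr = Yr)
    (hΨx : Ψ Xr = Xr)
    (hΨy : Ψ Yr = Yr⁻¹ *
      ((Cr (a (-1) (-1)) * Xr⁻¹ + Cr (a 0 (-1)) + Cr (a 1 (-1)) * Xr) /
        (Cr (a (-1) 1) * Xr⁻¹ + Cr (a 0 1) + Cr (a 1 1) * Xr))) :
    ((Φ.comp Ψ).comp (Φ.comp Ψ) = AlgHom.id ℂ RF ↔ Φ.comp Ψ = Ψ.comp Φ) ∧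
    (Φ.comp Ψ = Ψ.comp Φ ↔
      ((∃ l : ℂ, l ≠ 0 ∧ a (-1) (-1) = l * a 1 (-1) ∧ a (-1) 0 = l * a 1 0 ∧
          a (-1) 1 = l * a 1 1) ∨
       (∃ l : ℂ, l ≠ 0 ∧ a (-1) (-1) = l * a (-1) 1 ∧ a 0 (-1) = l * a 0 1 ∧
          a 1 (-1) = l * a 1 1))) ∧
    (Φ.comp Ψ = Ψ.comp Φ ↔
      ((a 0 1 * a 1 (-1) = a 0 (-1) * a 1 1 ∧
        a (-1) 1 * a 1 (-1) = a (-1) (-1) * a 1 1 ∧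
        a (-1) 1 * a 0 (-1) = a (-1) (-1) * a 0 1) ∨
       (a 1 0 * a (-1) 1 = a (-1) 0 * a 1 1 ∧
        a 1 (-1) * a (-1) 1 = a (-1) (-1) * a 1 1 ∧
        a 1 (-1) * a (-1) 0 = a (-1) (-1) * a 1 0))) :=
  statement4_general algebraicIndependent_Xr_Yr adjoin_Xr_Yr_eq_top a Φ Ψ ⟨hΦx, hΦy⟩ ⟨hΨy, hΨx⟩

end
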